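/- arXiv:q-alg/9412003 — 2 statements merged into one kernel-verified Lean document; each statement's English description precedes it below -/
import Mathlib

section
/- In a braided quantum group, the two candidate definitions of the secondary braiding agree: (id²⊗ε)(id⊗σ⁻¹)(φ⊗id)σ = (ε⊗id²)(σ⁻¹⊗id)(id⊗φ)σ. This common map is denoted τ. -/
open TensorProduct LinearMap

noncomputable section

variable (A : Type*) [Ring A] [Algebra ℂ A]

/-- Two-fold tensor product of `A` with itself. -/
abbrev T2 := A ⊗[ℂ] A
/-- Three-fold tensor product (right associated). -/
abbrev T3 := A ⊗[ℂ] (A ⊗[ℂ] A)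
/-- Four-fold tensor product (right associated). -/
abbrev T4 := A ⊗[ℂ] (A ⊗[ℂ] (A ⊗[ℂ] A))

variable {A}

/-- The multiplication of `A` as a linear map. -/
def mA : T2 A →ₗ[ℂ] A := LinearMap.mul' ℂ A

/-- `f ⊗ id` : a map of `T2` acting on the factors 1,2 of `T3`. -/
def op12 (f : T2 A →ₗ[ℂ] T2 A) : T3 A →ₗ[ℂ] T3 A :=
  (TensorProduct.assoc ℂ A A A).toLinearMap ∘ₗ f.rTensor A ∘ₗ
    (TensorProduct.assoc ℂ A A A).symm.toLinearMap

/-- `id ⊗ f` : a map of `T2` acting on the factors 2,3 of `T3`. -/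
def op23 (f : T2 A →ₗ[ℂ] T2 A) : T3 A →ₗ[ℂ] T3 A := f.lTensor A

/-- `f ⊗ id ⊗ id` : a map of `T2` acting on the factors 1,2 of `T4`. -/
def op12_4 (f : T2 A →ₗ[ℂ] T2 A) : T4 A →ₗ[ℂ] T4 A :=
  (TensorProduct.assoc ℂ A A (T2 A)).toLinearMap ∘ₗ f.rTensor (T2 A) ∘ₗ
    (TensorProduct.assoc ℂ A A (T2 A)).symm.toLinearMap

/-- `id ⊗ f ⊗ id` : a map of `T2` acting on the factors 2,3 of `T4`. -/
def op23_4 (f : T2 A →ₗ[ℂ] T2 A) : T4 A →ₗ[ℂ] T4 A := (op12 f).lTensor A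

/-- `id ⊗ id ⊗ f` : a map of `T2` acting on the factors 3,4 of `T4`. -/
def op34_4 (f : T2 A →ₗ[ℂ] T2 A) : T4 A →ₗ[ℂ] T4 A := (f.lTensor A).lTensor A

/-- `m ⊗ id : T3 → T2`. -/
def m12 : T3 A →ₗ[ℂ] T2 A :=
  (mA (A := A)).rTensor A ∘ₗ (TensorProduct.assoc ℂ A A A).symm.toLinearMap

/-- `id ⊗ m : T3 → T2`. -/
def m23 : T3 A →ₗ[ℂ] T2 A := (mA (A := A)).lTensor A

/-- `m ⊗ m : T4 → T2`. -/
def mm : T4 A →ₗ[ℂ] T2 A := m12 ∘ₗ ((mA (A := A)).lTensor A).lTensor A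

/-- A braided quantum group structure on the algebra `A` (Đurđević).
`φ` is the coproduct, `ε` the counit, `κ` the antipode, `σ` the braiding
(with given inverse `σ'`). -/
structure BQG (A : Type*) [Ring A] [Algebra ℂ A] where
  φ : A →ₗ[ℂ] T2 A
  ε : A →ₗ[ℂ] ℂ
  κ : A →ₗ[ℂ] A
  σ : T2 A →ₗ[ℂ] T2 A
  σ' : T2 A →ₗ[ℂ] T2 A
  σ_comp : σ ∘ₗ σ' = LinearMap.id
  comp_σ : σ' ∘ₗ σ = LinearMap.id
  κ_bij : Function.Bijective κ
  /-- coassociativity `(φ⊗id)φ = (id⊗φ)φ` -/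
  coassoc : (TensorProduct.assoc ℂ A A A).toLinearMap ∘ₗ φ.rTensor A ∘ₗ φ = φ.lTensor A ∘ₗ φ
  /-- `(ε⊗id)φ = id` -/
  counit_left : (TensorProduct.lid ℂ A).toLinearMap ∘ₗ ε.rTensor A ∘ₗ φ = LinearMap.id
  /-- `(id⊗ε)φ = id` -/
  counit_right : (TensorProduct.rid ℂ A).toLinearMap ∘ₗ ε.lTensor A ∘ₗ φ = LinearMap.id
  /-- `σ(m⊗id) = (id⊗m)(σ⊗id)(id⊗σ)` -/
  braid_mul_left : σ ∘ₗ m12 = m23 ∘ₗ op12 σ ∘ₗ op23 σ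
  /-- `σ(id⊗m) = (m⊗id)(id⊗σ)(σ⊗id)` -/
  braid_mul_right : σ ∘ₗ m23 = m12 ∘ₗ op23 σ ∘ₗ op12 σ
  /-- `φm = (m⊗m)(id⊗σ⊗id)(φ⊗φ)` -/
  comul_mul : φ ∘ₗ mA = mm ∘ₗ op23_4 σ ∘ₗ
      (TensorProduct.assoc ℂ A A (T2 A)).toLinearMap ∘ₗ φ.rTensor (T2 A) ∘ₗ φ.lTensor A
  /-- `(σ⊗id²)(id⊗φ⊗id)(σ⁻¹⊗id)(id⊗φ) = (id²⊗σ)(id⊗φ⊗id)(id⊗σ⁻¹)(φ⊗id)` -/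
  mixed_coassoc :
    op12_4 σ ∘ₗ ((TensorProduct.assoc ℂ A A A).toLinearMap ∘ₗ φ.rTensor A).lTensor A ∘ₗ
        op12 σ' ∘ₗ φ.lTensor A
      = op34_4 σ ∘ₗ ((TensorProduct.assoc ℂ A A A).toLinearMap ∘ₗ φ.rTensor A).lTensor A ∘ₗ
        op23 σ' ∘ₗ (TensorProduct.assoc ℂ A A A).toLinearMap ∘ₗ φ.rTensor A
  /-- `m(κ⊗id)φ = 1ε` -/
  antipode_left : mA ∘ₗ κ.rTensor A ∘ₗ φ = Algebra.linearMap ℂ A ∘ₗ ε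
  /-- `m(id⊗κ)φ = 1ε` -/
  antipode_right : mA ∘ₗ κ.lTensor A ∘ₗ φ = Algebra.linearMap ℂ A ∘ₗ ε

namespace BQG

variable {A : Type*} [Ring A] [Algebra ℂ A] (G : BQG A)

/-- `φ ⊗ id : T2 → T3`. -/
def φ1 : T2 A →ₗ[ℂ] T3 A := (TensorProduct.assoc ℂ A A A).toLinearMap ∘ₗ G.φ.rTensor A

/-- `id ⊗ φ : T2 → T3`. -/
def φ2 : T2 A →ₗ[ℂ] T3 A := G.φ.lTensor A

/-- `id² ⊗ ε : T3 → T2`. -/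
def ε3r : T3 A →ₗ[ℂ] T2 A :=
  ((TensorProduct.rid ℂ A).toLinearMap ∘ₗ G.ε.lTensor A).lTensor A

/-- `ε ⊗ id² : T3 → T2`. -/
def ε3l : T3 A →ₗ[ℂ] T2 A :=
  (TensorProduct.lid ℂ (T2 A)).toLinearMap ∘ₗ G.ε.rTensor (T2 A)

/-- The secondary braiding `τ = (id²⊗ε)(id⊗σ⁻¹)(φ⊗id)σ`. -/
def τ : T2 A →ₗ[ℂ] T2 A := G.ε3r ∘ₗ op23 G.σ' ∘ₗ G.φ1 ∘ₗ G.σ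

/-- `ε ⊗ ε : T2 → ℂ`. -/
def εε : T2 A →ₗ[ℂ] ℂ :=
  (TensorProduct.lid ℂ ℂ).toLinearMap ∘ₗ G.ε.rTensor ℂ ∘ₗ G.ε.lTensor A

end BQG

/-!
Apply `id ⊗ εm ⊗ id` to the axiom
`(σ ⊗ id²)(id ⊗ φ ⊗ id)(σ⁻¹ ⊗ id)(id ⊗ φ) = (id² ⊗ σ)(id ⊗ φ ⊗ id)(id ⊗ σ⁻¹)(φ ⊗ id)`.
Since `(id ⊗ εm)(σ ⊗ id)(id ⊗ φ) = ε ⊗ id`, the left-hand side becomes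
`(ε ⊗ id²)(σ⁻¹ ⊗ id)(id ⊗ φ)`; since `(εm ⊗ id)(id ⊗ σ)(φ ⊗ id) = id ⊗ ε`, the right-hand side
becomes `(id² ⊗ ε)(id ⊗ σ⁻¹)(φ ⊗ id)`.

To obtain the two contraction identities, apply `ε ⊗ id` and `id ⊗ ε` to
`φm = (m ⊗ m)(id ⊗ σ ⊗ id)(φ ⊗ φ)`. For instance, `F = (εm ⊗ id)(id ⊗ σ)(φ ⊗ id)` satisfies
`m(F ⊗ id)(id ⊗ φ) = m`, which says that each `F(a ⊗ ·)` has the same convolution product with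
the identity as `ε(·)a`, and the identity is convolution invertible with inverse the antipode.
-/

section TensorLegs

variable {R M N P Q : Type*} [CommSemiring R] [AddCommMonoid M] [Module R M]
  [AddCommMonoid N] [Module R N] [AddCommMonoid P] [Module R P] [AddCommMonoid Q] [Module R Q]

/-- The map `f ⊗ id`, acting on the first two factors of a right associated triple tensor
product. -/
def mapFirstTwo (L : Type*) [AddCommMonoid L] [Module R L] (f : M ⊗[R] N →ₗ[R] P ⊗[R] Q) :
    M ⊗[R] (N ⊗[R] L) →ₗ[R] P ⊗[R] (Q ⊗[R] L) :=
  (TensorProduct.assoc R P Q L).toLinearMap ∘ₗ f.rTensor L ∘ₗ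
    (TensorProduct.assoc R M N L).symm.toLinearMap

/-- The contraction `q ⊗ id` of the first two factors of a right associated triple tensor product
by a functional `q`. -/
def contractFirstTwo (L : Type*) [AddCommMonoid L] [Module R L] (q : M ⊗[R] N →ₗ[R] R) :
    M ⊗[R] (N ⊗[R] L) →ₗ[R] L :=
  (TensorProduct.lid R L).toLinearMap ∘ₗ q.rTensor L ∘ₗ
    (TensorProduct.assoc R M N L).symm.toLinearMap

/-- The contraction `id ⊗ q` of the last two factors of a right associated triple tensor product
by a functional `q`. -/
def contractLastTwo (L : Type*) [AddCommMonoid L] [Module R L] (q : M ⊗[R] N →ₗ[R] R) :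
    L ⊗[R] (M ⊗[R] N) →ₗ[R] L :=
  (TensorProduct.rid R L).toLinearMap ∘ₗ q.lTensor L

variable {L : Type*} [AddCommMonoid L] [Module R L]

lemma lid_comp_rTensor_comp_mapFirstTwo (e : P →ₗ[R] R) (f : M ⊗[R] N →ₗ[R] P ⊗[R] Q) :
    (TensorProduct.lid R (Q ⊗[R] L)).toLinearMap ∘ₗ e.rTensor (Q ⊗[R] L) ∘ₗ mapFirstTwo L f =
      ((TensorProduct.lid R Q).toLinearMap ∘ₗ e.rTensor Q ∘ₗ f).rTensor L ∘ₗ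
        (TensorProduct.assoc R M N L).symm.toLinearMap := by
  have h : (TensorProduct.lid R (Q ⊗[R] L)).toLinearMap ∘ₗ e.rTensor (Q ⊗[R] L) ∘ₗ
      (TensorProduct.assoc R P Q L).toLinearMap =
        ((TensorProduct.lid R Q).toLinearMap ∘ₗ e.rTensor Q).rTensor L := by
    ext p q l
    simp [TensorProduct.smul_tmul']
  simp only [mapFirstTwo, ← LinearMap.comp_assoc, LinearMap.rTensor_comp] at h ⊢
  rw [h]

lemma rTensor_rid_comp_lTensor_comp_assoc_symm (e : N →ₗ[R] R) :
    ((TensorProduct.rid R M).toLinearMap ∘ₗ e.lTensor M).rTensor L ∘ₗ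
        (TensorProduct.assoc R M N L).symm.toLinearMap =
      ((TensorProduct.lid R L).toLinearMap ∘ₗ e.rTensor L).lTensor M := by
  ext m n l
  simp [TensorProduct.smul_tmul]

lemma lTensor_contractFirstTwo_comp_assoc_comp_assoc (q : N ⊗[R] P →ₗ[R] R) :
    (contractFirstTwo L q).lTensor M ∘ₗ (TensorProduct.assoc R M N (P ⊗[R] L)).toLinearMap ∘ₗ
        (TensorProduct.assoc R (M ⊗[R] N) P L).toLinearMap =
      (contractLastTwo M q ∘ₗ (TensorProduct.assoc R M N P).toLinearMap).rTensor L := by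
  ext m n p l
  simp [contractFirstTwo, contractLastTwo, TensorProduct.smul_tmul']

lemma assoc_symm_comp_lTensor_mapFirstTwo_comp_assoc
    {S T : Type*} [AddCommMonoid S] [Module R S] [AddCommMonoid T] [Module R T]
    (f : N ⊗[R] P →ₗ[R] S ⊗[R] T) :
    (TensorProduct.assoc R M S (T ⊗[R] L)).symm.toLinearMap ∘ₗ (mapFirstTwo L f).lTensor M ∘ₗ
        (TensorProduct.assoc R M N (P ⊗[R] L)).toLinearMap =
      (TensorProduct.tensorTensorTensorAssoc R M S T L).symm.toLinearMap ∘ₗ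
        (f.lTensor M).rTensor L ∘ₗ
        (TensorProduct.tensorTensorTensorAssoc R M N P L).toLinearMap := by
  ext m n p l
  simp only [AlgebraTensorModule.curry_apply, restrictScalars_self, curry_apply, coe_comp,
    LinearEquiv.coe_coe, Function.comp_apply, TensorProduct.assoc_tmul, lTensor_tmul,
    tensorTensorTensorAssoc_tmul, rTensor_tmul, mapFirstTwo, TensorProduct.assoc_symm_tmul]
  induction f (n ⊗ₜ p) with
  | zero => simp
  | add x y hx hy => simp only [TensorProduct.add_tmul, TensorProduct.tmul_add, map_add, hx, hy]
  | tmul x y => simp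

lemma assoc_symm_comp_lTensor_assoc_comp_rTensor {S T : Type*} [AddCommMonoid S] [Module R S]
    [AddCommMonoid T] [Module R T] (f : N →ₗ[R] S ⊗[R] T) :
    (TensorProduct.assoc R M S (T ⊗[R] L)).symm.toLinearMap ∘ₗ
        ((TensorProduct.assoc R S T L).toLinearMap ∘ₗ f.rTensor L).lTensor M ∘ₗ
        (TensorProduct.assoc R M N L).toLinearMap =
      (TensorProduct.assoc R (M ⊗[R] S) T L).toLinearMap ∘ₗ
        ((TensorProduct.assoc R M S T).symm.toLinearMap ∘ₗ f.lTensor M).rTensor L := by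
  ext m n l
  simp only [AlgebraTensorModule.curry_apply, restrictScalars_self, curry_apply, coe_comp,
    LinearEquiv.coe_coe, Function.comp_apply, TensorProduct.assoc_tmul, lTensor_tmul, rTensor_tmul]
  induction f n with
  | zero => simp
  | add x y hx hy => simp only [TensorProduct.add_tmul, TensorProduct.tmul_add, map_add, hx, hy]
  | tmul x y => simp

lemma lTensor_contractFirstTwo_comp_mapFirstTwo {M' S S' T : Type*} [AddCommMonoid M']
    [Module R M'] [AddCommMonoid S] [Module R S] [AddCommMonoid S'] [Module R S']
    [AddCommMonoid T] [Module R T] (q : S' ⊗[R] T →ₗ[R] R) (f : M ⊗[R] S →ₗ[R] M' ⊗[R] S')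
    (g : N →ₗ[R] S ⊗[R] T) (h : P ⊗[R] Q →ₗ[R] M ⊗[R] N) :
    (contractFirstTwo L q).lTensor M' ∘ₗ mapFirstTwo (T ⊗[R] L) f ∘ₗ
        ((TensorProduct.assoc R S T L).toLinearMap ∘ₗ g.rTensor L).lTensor M ∘ₗ mapFirstTwo L h =
      (contractLastTwo M' q ∘ₗ mapFirstTwo T f ∘ₗ g.lTensor M ∘ₗ h).rTensor L ∘ₗ
        (TensorProduct.assoc R P Q L).symm.toLinearMap := by
  have hf : f.rTensor (T ⊗[R] L) ∘ₗ (TensorProduct.assoc R (M ⊗[R] S) T L).toLinearMap =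
      (TensorProduct.assoc R (M' ⊗[R] S') T L).toLinearMap ∘ₗ (f.rTensor T).rTensor L := by
    ext; simp
  calc
    _ = (contractFirstTwo L q).lTensor M' ∘ₗ
          (TensorProduct.assoc R M' S' (T ⊗[R] L)).toLinearMap ∘ₗ f.rTensor (T ⊗[R] L) ∘ₗ
          ((TensorProduct.assoc R M S (T ⊗[R] L)).symm.toLinearMap ∘ₗ
            ((TensorProduct.assoc R S T L).toLinearMap ∘ₗ g.rTensor L).lTensor M ∘ₗ
            (TensorProduct.assoc R M N L).toLinearMap) ∘ₗ
          h.rTensor L ∘ₗ (TensorProduct.assoc R P Q L).symm.toLinearMap := by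
      simp only [mapFirstTwo, LinearMap.comp_assoc]
    _ = ((contractFirstTwo L q).lTensor M' ∘ₗ
          (TensorProduct.assoc R M' S' (T ⊗[R] L)).toLinearMap ∘ₗ
          (TensorProduct.assoc R (M' ⊗[R] S') T L).toLinearMap) ∘ₗ
          (f.rTensor T ∘ₗ (TensorProduct.assoc R M S T).symm.toLinearMap ∘ₗ
            g.lTensor M ∘ₗ h).rTensor L ∘ₗ (TensorProduct.assoc R P Q L).symm.toLinearMap := by
      rw [assoc_symm_comp_lTensor_assoc_comp_rTensor]
      simp only [LinearMap.rTensor_comp, LinearMap.comp_assoc]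
      rw [← LinearMap.comp_assoc _ _ (f.rTensor (T ⊗[R] L)), hf, LinearMap.comp_assoc]
    _ = _ := by
      rw [lTensor_contractFirstTwo_comp_assoc_comp_assoc]
      simp only [mapFirstTwo, LinearMap.rTensor_comp, LinearMap.comp_assoc]

end TensorLegs

section Convolution

variable {R H M : Type*} [CommSemiring R] [Semiring H] [Algebra R H] [Coalgebra R H]
  [AddCommMonoid M] [Module R M]

open Coalgebra WithConv

/-- The map `m(F ⊗ id)(id ⊗ φ)`: the convolution product with the identity of `H`, on the right,
of a family `F` of linear maps `H → H` parametrised by `M`. -/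
def convIdRight (F : M ⊗[R] H →ₗ[R] H) : M ⊗[R] H →ₗ[R] H :=
  LinearMap.mul' R H ∘ₗ F.rTensor H ∘ₗ (TensorProduct.assoc R M H H).symm.toLinearMap ∘ₗ
    comul.lTensor M

/-- The map `m(id ⊗ F)(φ ⊗ id)`: the convolution product with the identity of `H`, on the left,
of a family `F` of linear maps `H → H` parametrised by `M`. -/
def convIdLeft (F : H ⊗[R] M →ₗ[R] H) : H ⊗[R] M →ₗ[R] H :=
  LinearMap.mul' R H ∘ₗ F.lTensor H ∘ₗ (TensorProduct.assoc R H H M).toLinearMap ∘ₗ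
    comul.rTensor M

lemma toConv_convIdRight_comp_mk (F : M ⊗[R] H →ₗ[R] H) (m : M) :
    toConv (convIdRight F ∘ₗ TensorProduct.mk R M H m) =
      toConv (F ∘ₗ TensorProduct.mk R M H m) * toConv LinearMap.id := by
  have hmk : (F ∘ₗ TensorProduct.mk R M H m).rTensor H =
      F.rTensor H ∘ₗ (TensorProduct.assoc R M H H).symm.toLinearMap ∘ₗ
        TensorProduct.mk R M (H ⊗[R] H) m := by
    ext; simp
  ext b
  exact congrArg (LinearMap.mul' R H) (LinearMap.congr_fun hmk (comul b)).symm

lemma toConv_convIdLeft_comp_mk_flip (F : H ⊗[R] M →ₗ[R] H) (m : M) :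
    toConv (convIdLeft F ∘ₗ (TensorProduct.mk R H M).flip m) =
      toConv LinearMap.id * toConv (F ∘ₗ (TensorProduct.mk R H M).flip m) := by
  have hmk : (F ∘ₗ (TensorProduct.mk R H M).flip m).lTensor H =
      F.lTensor H ∘ₗ (TensorProduct.assoc R H H M).toLinearMap ∘ₗ
        (TensorProduct.mk R (H ⊗[R] H) M).flip m := by
    ext; simp
  ext a
  exact congrArg (LinearMap.mul' R H) (LinearMap.congr_fun hmk (comul a)).symm

lemma convIdRight_injective (hid : IsRightRegular (toConv (LinearMap.id : H →ₗ[R] H))) :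
    Function.Injective (convIdRight : (M ⊗[R] H →ₗ[R] H) → M ⊗[R] H →ₗ[R] H) := by
  intro F G h
  refine TensorProduct.ext (LinearMap.ext fun m ↦ toConv_injective (hid ?_))
  exact (toConv_convIdRight_comp_mk F m).symm.trans (h ▸ toConv_convIdRight_comp_mk G m)

lemma convIdLeft_injective (hid : IsLeftRegular (toConv (LinearMap.id : H →ₗ[R] H))) :
    Function.Injective (convIdLeft : (H ⊗[R] M →ₗ[R] H) → H ⊗[R] M →ₗ[R] H) := by
  intro F G h
  refine TensorProduct.ext (LinearMap.ext₂ fun a m ↦ ?_)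
  have key : toConv (F ∘ₗ (TensorProduct.mk R H M).flip m) =
      toConv (G ∘ₗ (TensorProduct.mk R H M).flip m) :=
    hid <| (toConv_convIdLeft_comp_mk_flip F m).symm.trans
      (h ▸ toConv_convIdLeft_comp_mk_flip G m)
  exact LinearMap.congr_fun (toConv_injective key) a

variable (R H) in
lemma lid_comp_rTensor_counit_comp_comul :
    (TensorProduct.lid R H).toLinearMap ∘ₗ counit.rTensor H ∘ₗ comul = LinearMap.id := by
  ext a; simp

variable (R H) in
lemma rid_comp_lTensor_counit_comp_comul :
    (TensorProduct.rid R H).toLinearMap ∘ₗ counit.lTensor H ∘ₗ comul = LinearMap.id := by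
  ext a; simp

lemma convIdRight_rid_comp_lTensor_counit :
    convIdRight ((TensorProduct.rid R H).toLinearMap ∘ₗ counit.lTensor H) =
      LinearMap.mul' R H := by
  rw [convIdRight, ← LinearMap.comp_assoc (LinearMap.lTensor H comul),
    rTensor_rid_comp_lTensor_comp_assoc_symm, ← LinearMap.lTensor_comp, LinearMap.comp_assoc,
    lid_comp_rTensor_counit_comp_comul, LinearMap.lTensor_id, LinearMap.comp_id]

lemma convIdLeft_lid_comp_rTensor_counit :
    convIdLeft ((TensorProduct.lid R H).toLinearMap ∘ₗ counit.rTensor H) =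
      LinearMap.mul' R H := by
  rw [convIdLeft, ← rTensor_rid_comp_lTensor_comp_assoc_symm, LinearMap.comp_assoc,
    ← LinearMap.comp_assoc (LinearMap.rTensor H comul), LinearEquiv.symm_comp,
    LinearMap.id_comp, ← LinearMap.rTensor_comp, LinearMap.comp_assoc,
    rid_comp_lTensor_counit_comp_comul, LinearMap.rTensor_id, LinearMap.comp_id]

end Convolution

section BraidedComul

variable {R H : Type*} [CommSemiring R] [Semiring H] [Algebra R H] [Coalgebra R H]

open Coalgebra WithConv

/-- Multiplicativity of the coproduct with respect to the product of `H ⊗ H` twisted by `σ`, that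
is, `φm = (m ⊗ m)(id ⊗ σ ⊗ id)(φ ⊗ φ)`. -/
structure IsBraidedComulMul (σ : H ⊗[R] H →ₗ[R] H ⊗[R] H) : Prop where
  comul_comp_mul' : comul ∘ₗ LinearMap.mul' R H =
    TensorProduct.map (LinearMap.mul' R H) (LinearMap.mul' R H) ∘ₗ
      (TensorProduct.assoc R H H (H ⊗[R] H)).symm.toLinearMap ∘ₗ (mapFirstTwo H σ).lTensor H ∘ₗ
      (TensorProduct.assoc R H H (H ⊗[R] H)).toLinearMap ∘ₗ TensorProduct.map comul comul

variable (R H) in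
/-- The map `φ ⊗ id : H ⊗ H → H ⊗ (H ⊗ H)`. -/
def comulFirst : H ⊗[R] H →ₗ[R] H ⊗[R] (H ⊗[R] H) :=
  (TensorProduct.assoc R H H H).toLinearMap ∘ₗ comul.rTensor H

variable {σ : H ⊗[R] H →ₗ[R] H ⊗[R] H}

lemma IsBraidedComulMul.convIdLeft_contractLastTwo (hσ : IsBraidedComulMul σ) :
    convIdLeft (contractLastTwo H (counit ∘ₗ LinearMap.mul' R H) ∘ₗ mapFirstTwo H σ ∘ₗ
      comul.lTensor H) = LinearMap.mul' R H := by
  have hmul : (TensorProduct.rid R H).toLinearMap ∘ₗ counit.lTensor H ∘ₗ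
      TensorProduct.map (LinearMap.mul' R H) (LinearMap.mul' R H) ∘ₗ
      (TensorProduct.assoc R H H (H ⊗[R] H)).symm.toLinearMap =
      LinearMap.mul' R H ∘ₗ (contractLastTwo H (counit ∘ₗ LinearMap.mul' R H)).lTensor H := by
    ext a b c d
    simp [contractLastTwo]
  have hcomul : (TensorProduct.assoc R H H (H ⊗[R] H)).toLinearMap ∘ₗ
      TensorProduct.map comul comul =
      (comul.lTensor H).lTensor H ∘ₗ (TensorProduct.assoc R H H H).toLinearMap ∘ₗ
        comul.rTensor H := by
    rw [← LinearMap.lTensor_comp_rTensor, LinearMap.lTensor_tensor]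
    ext; simp
  calc
    _ = (LinearMap.mul' R H ∘ₗ (contractLastTwo H (counit ∘ₗ LinearMap.mul' R H)).lTensor H) ∘ₗ
        (mapFirstTwo H σ).lTensor H ∘ₗ (comul.lTensor H).lTensor H ∘ₗ
        (TensorProduct.assoc R H H H).toLinearMap ∘ₗ comul.rTensor H := by
      simp only [convIdLeft, LinearMap.lTensor_comp, LinearMap.comp_assoc]
    _ = ((TensorProduct.rid R H).toLinearMap ∘ₗ counit.lTensor H ∘ₗ comul) ∘ₗ
        LinearMap.mul' R H := by
      simp only [← hmul, ← hcomul, LinearMap.comp_assoc, hσ.comul_comp_mul']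
    _ = LinearMap.mul' R H := by
      rw [rid_comp_lTensor_counit_comp_comul, LinearMap.id_comp]

lemma IsBraidedComulMul.convIdRight_contractFirstTwo (hσ : IsBraidedComulMul σ) :
    convIdRight (contractFirstTwo H (counit ∘ₗ LinearMap.mul' R H) ∘ₗ σ.lTensor H ∘ₗ
      comulFirst R H) = LinearMap.mul' R H := by
  let α := TensorProduct.tensorTensorTensorAssoc R H H H H
  have hmul : (TensorProduct.lid R H).toLinearMap ∘ₗ counit.rTensor H ∘ₗ
      TensorProduct.map (LinearMap.mul' R H) (LinearMap.mul' R H) ∘ₗ α.symm.toLinearMap =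
      LinearMap.mul' R H ∘ₗ (contractFirstTwo H (counit ∘ₗ LinearMap.mul' R H)).rTensor H := by
    ext a b c d
    simp [α, contractFirstTwo]
  have hcomul : α.toLinearMap ∘ₗ TensorProduct.map comul comul =
      (comulFirst R H).rTensor H ∘ₗ (TensorProduct.assoc R H H H).symm.toLinearMap ∘ₗ
        comul.lTensor H := by
    have hα : α.toLinearMap = (TensorProduct.assoc R H H H).toLinearMap.rTensor H ∘ₗ
        (TensorProduct.assoc R (H ⊗[R] H) H H).symm.toLinearMap := by
      ext; simp [α]
    rw [hα, ← LinearMap.rTensor_comp_lTensor, LinearMap.rTensor_tensor, comulFirst,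
      LinearMap.rTensor_comp]
    ext; simp
  calc
    _ = (LinearMap.mul' R H ∘ₗ (contractFirstTwo H (counit ∘ₗ LinearMap.mul' R H)).rTensor H) ∘ₗ
        (σ.lTensor H).rTensor H ∘ₗ (comulFirst R H).rTensor H ∘ₗ
        (TensorProduct.assoc R H H H).symm.toLinearMap ∘ₗ comul.lTensor H := by
      simp only [convIdRight, LinearMap.rTensor_comp, LinearMap.comp_assoc]
    _ = (TensorProduct.lid R H).toLinearMap ∘ₗ counit.rTensor H ∘ₗ
        TensorProduct.map (LinearMap.mul' R H) (LinearMap.mul' R H) ∘ₗ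
        (α.symm.toLinearMap ∘ₗ (σ.lTensor H).rTensor H ∘ₗ α.toLinearMap) ∘ₗ
        TensorProduct.map comul comul := by
      simp only [← hmul, ← hcomul, LinearMap.comp_assoc]
    _ = ((TensorProduct.lid R H).toLinearMap ∘ₗ counit.rTensor H ∘ₗ comul) ∘ₗ
        LinearMap.mul' R H := by
      simp only [α, ← assoc_symm_comp_lTensor_mapFirstTwo_comp_assoc, LinearMap.comp_assoc,
        hσ.comul_comp_mul']
    _ = LinearMap.mul' R H := by
      rw [lid_comp_rTensor_counit_comp_comul, LinearMap.id_comp]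

lemma IsBraidedComulMul.contractLastTwo_comp_mapFirstTwo_comp_comul (hσ : IsBraidedComulMul σ)
    (hid : IsLeftRegular (toConv (LinearMap.id : H →ₗ[R] H))) :
    contractLastTwo H (counit ∘ₗ LinearMap.mul' R H) ∘ₗ mapFirstTwo H σ ∘ₗ comul.lTensor H =
      (TensorProduct.lid R H).toLinearMap ∘ₗ counit.rTensor H :=
  convIdLeft_injective hid <|
    hσ.convIdLeft_contractLastTwo.trans convIdLeft_lid_comp_rTensor_counit.symm

lemma IsBraidedComulMul.contractFirstTwo_comp_lTensor_comp_comulFirst (hσ : IsBraidedComulMul σ)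
    (hid : IsRightRegular (toConv (LinearMap.id : H →ₗ[R] H))) :
    contractFirstTwo H (counit ∘ₗ LinearMap.mul' R H) ∘ₗ σ.lTensor H ∘ₗ comulFirst R H =
      (TensorProduct.rid R H).toLinearMap ∘ₗ counit.lTensor H :=
  convIdRight_injective hid <|
    hσ.convIdRight_contractFirstTwo.trans convIdRight_rid_comp_lTensor_counit.symm

/-- Mixed coassociativity of the coproduct and the braiding:
`(σ ⊗ id²)(id ⊗ φ ⊗ id)(σ⁻¹ ⊗ id)(id ⊗ φ) = (id² ⊗ σ)(id ⊗ φ ⊗ id)(id ⊗ σ⁻¹)(φ ⊗ id)`. -/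
structure IsMixedCoassoc (σ : H ⊗[R] H ≃ₗ[R] H ⊗[R] H) : Prop where
  mixed_coassoc : mapFirstTwo (H ⊗[R] H) σ.toLinearMap ∘ₗ (comulFirst R H).lTensor H ∘ₗ
      mapFirstTwo H σ.symm.toLinearMap ∘ₗ comul.lTensor H =
    (σ.toLinearMap.lTensor H).lTensor H ∘ₗ (comulFirst R H).lTensor H ∘ₗ
      σ.symm.toLinearMap.lTensor H ∘ₗ comulFirst R H

theorem bqg_tau_well_defined_general (σ : H ⊗[R] H ≃ₗ[R] H ⊗[R] H)
    (hid : IsRegular (toConv (LinearMap.id : H →ₗ[R] H))) (hσ : IsBraidedComulMul σ.toLinearMap)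
    (hmixed : IsMixedCoassoc σ) :
    ((TensorProduct.rid R H).toLinearMap ∘ₗ counit.lTensor H).lTensor H ∘ₗ
        σ.symm.toLinearMap.lTensor H ∘ₗ comulFirst R H ∘ₗ σ.toLinearMap =
      ((TensorProduct.lid R (H ⊗[R] H)).toLinearMap ∘ₗ counit.rTensor (H ⊗[R] H)) ∘ₗ
        mapFirstTwo H σ.symm.toLinearMap ∘ₗ comul.lTensor H ∘ₗ σ.toLinearMap := by
  let q : H ⊗[R] H →ₗ[R] R := counit ∘ₗ LinearMap.mul' R H
  have left : (contractFirstTwo H q).lTensor H ∘ₗ mapFirstTwo (H ⊗[R] H) σ.toLinearMap ∘ₗ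
      (comulFirst R H).lTensor H ∘ₗ mapFirstTwo H σ.symm.toLinearMap =
        ((TensorProduct.lid R (H ⊗[R] H)).toLinearMap ∘ₗ counit.rTensor (H ⊗[R] H)) ∘ₗ
          mapFirstTwo H σ.symm.toLinearMap := by
    rw [comulFirst, lTensor_contractFirstTwo_comp_mapFirstTwo, LinearMap.comp_assoc,
      lid_comp_rTensor_comp_mapFirstTwo]
    have contraction := hσ.contractLastTwo_comp_mapFirstTwo_comp_comul hid.left
    simp only [← LinearMap.comp_assoc] at contraction ⊢
    rw [contraction]
  have right : (contractFirstTwo H q).lTensor H ∘ₗ (σ.toLinearMap.lTensor H).lTensor H ∘ₗ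
      (comulFirst R H).lTensor H =
        ((TensorProduct.rid R H).toLinearMap ∘ₗ counit.lTensor H).lTensor H := by
    rw [← LinearMap.lTensor_comp, ← LinearMap.lTensor_comp,
      hσ.contractFirstTwo_comp_lTensor_comp_comulFirst hid.right]
  have contracted := congrArg ((contractFirstTwo H q).lTensor H ∘ₗ ·) hmixed.mixed_coassoc
  simp only [← LinearMap.comp_assoc] at left right contracted ⊢
  rw [left, right] at contracted
  rw [contracted]

end BraidedComul

lemma mm_eq_map_comp_assoc_symm : mm (A := A) = TensorProduct.map mA mA ∘ₗ
    (TensorProduct.assoc ℂ A A (T2 A)).symm.toLinearMap := by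
  ext; simp [mm, m12, mA]

namespace BQG

variable {A : Type*} [Ring A] [Algebra ℂ A] (G : BQG A)

/-- The coalgebra underlying a braided quantum group. -/
abbrev coalgebra : Coalgebra ℂ A where
  comul := G.φ
  counit := G.ε
  coassoc := G.coassoc
  rTensor_counit_comp_comul :=
    (LinearEquiv.eq_toLinearMap_symm_comp _ _).mpr G.counit_left
  lTensor_counit_comp_comul :=
    (LinearEquiv.eq_toLinearMap_symm_comp _ _).mpr G.counit_right

/-- The braiding as a linear equivalence. -/
def braiding : T2 A ≃ₗ[ℂ] T2 A :=
  LinearEquiv.ofLinearMap G.σ G.σ' G.σ_comp G.comp_σ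

lemma isUnit_toConv_id :
    letI := G.coalgebra
    IsUnit (WithConv.toConv (LinearMap.id : A →ₗ[ℂ] A)) :=
  letI := G.coalgebra
  isUnit_iff_exists.mpr ⟨WithConv.toConv G.κ, congrArg WithConv.toConv G.antipode_right,
    congrArg WithConv.toConv G.antipode_left⟩

lemma isBraidedComulMul_braiding :
    letI := G.coalgebra
    IsBraidedComulMul G.braiding.toLinearMap := by
  let := G.coalgebra
  refine ⟨G.comul_mul.trans ?_⟩
  rw [mm_eq_map_comp_assoc_symm, LinearMap.rTensor_comp_lTensor, LinearMap.comp_assoc]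
  rfl

lemma isMixedCoassoc_braiding :
    letI := G.coalgebra
    IsMixedCoassoc G.braiding :=
  letI := G.coalgebra
  ⟨G.mixed_coassoc⟩

end BQG

/-- The two candidate definitions of the secondary braiding agree:
`(id²⊗ε)(id⊗σ⁻¹)(φ⊗id)σ = (ε⊗id²)(σ⁻¹⊗id)(id⊗φ)σ`. -/
theorem bqg_tau_well_defined {A : Type*} [Ring A] [Algebra ℂ A] (G : BQG A) :
    G.ε3r ∘ₗ op23 G.σ' ∘ₗ G.φ1 ∘ₗ G.σ
      = G.ε3l ∘ₗ op12 G.σ' ∘ₗ G.φ2 ∘ₗ G.σ :=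
  letI := G.coalgebra
  bqg_tau_well_defined_general G.braiding G.isUnit_toConv_id.isRegular
    G.isBraidedComulMul_braiding G.isMixedCoassoc_braiding
end
end

section
/- In a braided quantum group, the maps στ⁻¹ and σ⁻¹τ (where τ is the secondary braiding) satisfy the commutation relations (στ⁻¹⊗id)(id⊗στ⁻¹) = (id⊗στ⁻¹)(στ⁻¹⊗id), (στ⁻¹⊗id)(id⊗σ⁻¹τ) = (id⊗σ⁻¹τ)(στ⁻¹⊗id), and (σ⁻¹τ⊗id)(id⊗σ⁻¹τ) = (id⊗σ⁻¹τ)(σ⁻¹τ⊗id). -/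
open TensorProduct LinearMap

noncomputable section

variable (A : Type*) [Ring A] [Algebra ℂ A]

variable {A}

/-!
If `f` is a right and `g` a left comodule map of `A ⊗ A`, then `f ⊗ id` and `id ⊗ g` commute:
after composing with the injective map `id ⊗ φ ⊗ id`, they act on disjoint pairs of factors of
`A ⊗ A ⊗ A ⊗ A`. So it suffices that `σ⁻¹τ` and `τσ⁻¹`, hence also its inverse `στ⁻¹`, are
comodule maps on both sides.

Multiplicativity of `φ` and invertibility of `id` for convolution give
`(εm ⊗ id)(id ⊗ σ)(φ ⊗ id) = id ⊗ ε` and `(id ⊗ εm)(σ ⊗ id)(id ⊗ φ) = ε ⊗ id`. Together with mixed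
coassociativity these yield `σ⁻¹τ = (id ⊗ εm ⊗ id)(φ ⊗ φ)`, which is visibly colinear on both sides,
and `τσ⁻¹ = (id² ⊗ ε)(id ⊗ σ⁻¹)(φ ⊗ id) = (ε ⊗ id²)(σ⁻¹ ⊗ id)(id ⊗ φ)`, whose first form is left
colinear and whose second form is right colinear.

All maps act on the leading factors of `A ⊗ (⋯ ⊗ C)` for an arbitrary module `C`, so that
coassociativity and its relatives apply at any position by applying `id ⊗ -`.
-/

section Head

variable {R M N P Q S T C D E : Type*} [CommSemiring R]
  [AddCommMonoid M] [Module R M] [AddCommMonoid N] [Module R N]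
  [AddCommMonoid P] [Module R P] [AddCommMonoid Q] [Module R Q]
  [AddCommMonoid S] [Module R S] [AddCommMonoid T] [Module R T]
  [AddCommMonoid C] [Module R C] [AddCommMonoid D] [Module R D] [AddCommMonoid E] [Module R E]

theorem lTensor_square {f : D →ₗ[R] E} {g : C →ₗ[R] D} {f' : P →ₗ[R] E} {g' : C →ₗ[R] P}
    (h : ∀ y, f (g y) = f' (g' y)) (x : M ⊗[R] C) :
    f.lTensor M (g.lTensor M x) = f'.lTensor M (g'.lTensor M x) := by
  have h_comp : f ∘ₗ g = f' ∘ₗ g' := LinearMap.ext h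
  rw [← lTensor_comp_apply, h_comp, lTensor_comp_apply]

theorem lTensor_leftInverse {f : D →ₗ[R] C} {g : C →ₗ[R] D} (h : ∀ y, f (g y) = y)
    (x : M ⊗[R] C) : f.lTensor M (g.lTensor M x) = x := by
  have h_comp : f ∘ₗ g = LinearMap.id := LinearMap.ext h
  rw [← lTensor_comp_apply, h_comp, lTensor_id_apply]

/-- The functional `f ⊗ id_C` on the leading factor, for `f : M → R`. -/
def evalHead (f : M →ₗ[R] R) : M ⊗[R] C →ₗ[R] C :=
  (TensorProduct.lid R C).toLinearMap ∘ₗ f.rTensor C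

/-- The map `f ⊗ id_C` for `f : M → N ⊗ P`, with right-associated target. -/
def splitHead (f : M →ₗ[R] N ⊗[R] P) : M ⊗[R] C →ₗ[R] N ⊗[R] (P ⊗[R] C) :=
  (TensorProduct.assoc R N P C).toLinearMap ∘ₗ f.rTensor C

/-- The map `f ⊗ id_C` for `f : M ⊗ N → P`, with right-associated source. -/
def mergeHead (f : M ⊗[R] N →ₗ[R] P) : M ⊗[R] (N ⊗[R] C) →ₗ[R] P ⊗[R] C :=
  f.rTensor C ∘ₗ (TensorProduct.assoc R M N C).symm.toLinearMap

/-- The map `f ⊗ id_C` for `f : M ⊗ N → P ⊗ Q`, with right-associated source and target. -/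
def mixHead (f : M ⊗[R] N →ₗ[R] P ⊗[R] Q) :
    M ⊗[R] (N ⊗[R] C) →ₗ[R] P ⊗[R] (Q ⊗[R] C) :=
  splitHead f ∘ₗ (TensorProduct.assoc R M N C).symm.toLinearMap

/-- The map `m ↦ m ⊗ c`; identities between maps `f ⊗ id_C` are checked on its image. -/
def attach (c : C) : M →ₗ[R] M ⊗[R] C :=
  (TensorProduct.mk R M C).flip c

theorem eq_of_forall_attach {f g : M ⊗[R] C →ₗ[R] D}
    (h : ∀ c m, f (attach c m) = g (attach c m)) (x : M ⊗[R] C) : f x = g x :=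
  LinearMap.congr_fun (TensorProduct.ext' fun m c => h c m) x

theorem eq_of_forall_lTensor_attach {f g : M ⊗[R] (N ⊗[R] C) →ₗ[R] D}
    (h : ∀ (c : C) w, f ((attach c).lTensor M w) = g ((attach c).lTensor M w))
    (x : M ⊗[R] (N ⊗[R] C)) : f x = g x :=
  LinearMap.congr_fun (TensorProduct.ext_threefold' fun m n c => h c (m ⊗ₜ n)) x

theorem assoc_attach (c : C) (w : M ⊗[R] N) :
    TensorProduct.assoc R M N C (attach c w) = (attach c).lTensor M w := by
  have h_comp : (TensorProduct.assoc R M N C).toLinearMap ∘ₗ attach c = (attach c).lTensor M :=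
    TensorProduct.ext' fun _ _ => rfl
  exact LinearMap.congr_fun h_comp w

theorem lTensor_attach (g : C →ₗ[R] D) (c : C) (m : M) :
    g.lTensor M (attach c m) = attach (g c) m := rfl

theorem rTensor_attach (f : M →ₗ[R] N) (c : C) (m : M) :
    f.rTensor C (attach c m) = attach c (f m) := rfl

theorem lTensor_lTensor_attach (g : C →ₗ[R] D) (c : C) (w : M ⊗[R] N) :
    (g.lTensor N).lTensor M ((attach c).lTensor M w) = (attach (g c)).lTensor M w := by
  rw [← lTensor_comp_apply]; rfl

theorem evalHead_attach (f : M →ₗ[R] R) (c : C) (m : M) :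
    evalHead f (attach c m) = f m • c := rfl

theorem splitHead_attach (f : M →ₗ[R] N ⊗[R] P) (c : C) (m : M) :
    splitHead f (attach c m) = (attach c).lTensor N (f m) :=
  assoc_attach c (f m)

theorem mergeHead_attach (f : M ⊗[R] N →ₗ[R] P) (c : C) (w : M ⊗[R] N) :
    mergeHead f ((attach c).lTensor M w) = attach c (f w) := by
  rw [← assoc_attach, mergeHead, LinearMap.comp_apply, LinearEquiv.coe_coe,
    LinearEquiv.symm_apply_apply, rTensor_attach]

theorem mixHead_attach (f : M ⊗[R] N →ₗ[R] P ⊗[R] Q) (c : C) (w : M ⊗[R] N) :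
    mixHead f ((attach c).lTensor M w) = (attach c).lTensor P (f w) := by
  rw [← assoc_attach, mixHead, LinearMap.comp_apply, LinearEquiv.coe_coe,
    LinearEquiv.symm_apply_apply, splitHead_attach]

theorem rTensor_lTensor_comm (f : M →ₗ[R] N) (g : C →ₗ[R] D) (x : M ⊗[R] C) :
    f.rTensor D (g.lTensor M x) = g.lTensor N (f.rTensor C x) := by
  rw [← LinearMap.comp_apply, ← LinearMap.comp_apply, rTensor_comp_lTensor, lTensor_comp_rTensor]

theorem evalHead_lTensor (f : M →ₗ[R] R) (g : C →ₗ[R] D) (x : M ⊗[R] C) :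
    evalHead f (g.lTensor M x) = g (evalHead f x) :=
  eq_of_forall_attach (f := evalHead f ∘ₗ g.lTensor M) (g := g ∘ₗ evalHead f)
    (fun c m => (map_smul g (f m) c).symm) x

theorem splitHead_lTensor (f : M →ₗ[R] N ⊗[R] P) (g : C →ₗ[R] D) (x : M ⊗[R] C) :
    splitHead f (g.lTensor M x) = (g.lTensor P).lTensor N (splitHead f x) := by
  refine eq_of_forall_attach (f := splitHead f ∘ₗ g.lTensor M)
    (g := (g.lTensor P).lTensor N ∘ₗ splitHead f) (fun c m => ?_) x
  simp only [LinearMap.comp_apply, lTensor_attach, splitHead_attach, lTensor_lTensor_attach]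

theorem mergeHead_lTensor (f : M ⊗[R] N →ₗ[R] P) (g : C →ₗ[R] D) (x : M ⊗[R] (N ⊗[R] C)) :
    mergeHead f ((g.lTensor N).lTensor M x) = g.lTensor P (mergeHead f x) := by
  refine eq_of_forall_lTensor_attach (f := mergeHead f ∘ₗ (g.lTensor N).lTensor M)
    (g := g.lTensor P ∘ₗ mergeHead f) (fun c w => ?_) x
  simp only [LinearMap.comp_apply, lTensor_attach, mergeHead_attach, lTensor_lTensor_attach]

theorem mixHead_lTensor (f : M ⊗[R] N →ₗ[R] P ⊗[R] Q) (g : C →ₗ[R] D)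
    (x : M ⊗[R] (N ⊗[R] C)) :
    mixHead f ((g.lTensor N).lTensor M x) = (g.lTensor Q).lTensor P (mixHead f x) := by
  refine eq_of_forall_lTensor_attach (f := mixHead f ∘ₗ (g.lTensor N).lTensor M)
    (g := (g.lTensor Q).lTensor P ∘ₗ mixHead f) (fun c w => ?_) x
  simp only [LinearMap.comp_apply, mixHead_attach, lTensor_lTensor_attach]

theorem mixHead_id (x : M ⊗[R] (N ⊗[R] C)) : mixHead LinearMap.id x = x := by
  refine eq_of_forall_lTensor_attach (g := LinearMap.id) (fun c w => ?_) x
  rw [mixHead_attach, LinearMap.id_apply, LinearMap.id_apply]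

theorem mixHead_comp (f : P ⊗[R] Q →ₗ[R] S ⊗[R] T) (g : M ⊗[R] N →ₗ[R] P ⊗[R] Q)
    (x : M ⊗[R] (N ⊗[R] C)) :
    mixHead (f ∘ₗ g) x = mixHead f (mixHead g x) := by
  refine eq_of_forall_lTensor_attach (g := mixHead f ∘ₗ mixHead g) (fun c w => ?_) x
  simp only [LinearMap.comp_apply, mixHead_attach]

end Head

section Algebra

variable {C : Type*} [AddCommMonoid C] [Module ℂ C]

/-- The multiplication `m ⊗ id_C` of the two leading factors. -/
abbrev mulHead : A ⊗[ℂ] (A ⊗[ℂ] C) →ₗ[ℂ] A ⊗[ℂ] C := mergeHead mA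

theorem mulHead_one_tmul (x : A ⊗[ℂ] C) : mulHead (1 ⊗ₜ x) = x := by
  refine LinearMap.congr_fun (f := mulHead ∘ₗ TensorProduct.mk ℂ A (A ⊗[ℂ] C) 1)
    (g := LinearMap.id) (TensorProduct.ext' fun a c => ?_) x
  simp [mergeHead, mA]

theorem mulHead_lTensor_mk_one (x : A ⊗[ℂ] C) :
    mulHead ((TensorProduct.mk ℂ A C 1).lTensor A x) = x := by
  refine LinearMap.congr_fun (f := mulHead ∘ₗ (TensorProduct.mk ℂ A C 1).lTensor A)
    (g := LinearMap.id) (TensorProduct.ext' fun a c => ?_) x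
  simp [mergeHead, mA]

theorem mulHead_assoc (x : A ⊗[ℂ] (A ⊗[ℂ] (A ⊗[ℂ] C))) :
    mulHead (mulHead x) = mulHead (mulHead.lTensor A x) := by
  have h_comp : mulHead ∘ₗ mulHead = mulHead ∘ₗ (mulHead (C := C)).lTensor A := by
    ext a b c d
    simp [mergeHead, mA, mul_assoc]
  exact LinearMap.congr_fun h_comp x

end Algebra

namespace BQG

variable {A : Type*} [Ring A] [Algebra ℂ A] (G : BQG A)
variable {C D : Type*} [AddCommMonoid C] [Module ℂ C] [AddCommMonoid D] [Module ℂ D]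

/-- The coproduct `φ ⊗ id_C` on the leading factor. -/
abbrev comul : A ⊗[ℂ] C →ₗ[ℂ] A ⊗[ℂ] (A ⊗[ℂ] C) := splitHead G.φ

/-- The counit `ε ⊗ id_C` on the leading factor. -/
abbrev counit : A ⊗[ℂ] C →ₗ[ℂ] C := evalHead G.ε

/-- The antipode `κ ⊗ id_C` on the leading factor. -/
abbrev antipode : A ⊗[ℂ] C →ₗ[ℂ] A ⊗[ℂ] C := G.κ.rTensor C

/-- The braiding `σ ⊗ id_C` of the two leading factors. -/
abbrev braid : A ⊗[ℂ] (A ⊗[ℂ] C) →ₗ[ℂ] A ⊗[ℂ] (A ⊗[ℂ] C) := mixHead G.σ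

/-- The inverse braiding `σ⁻¹ ⊗ id_C` of the two leading factors. -/
abbrev braidInv : A ⊗[ℂ] (A ⊗[ℂ] C) →ₗ[ℂ] A ⊗[ℂ] (A ⊗[ℂ] C) := mixHead G.σ'

theorem braid_braidInv (x : A ⊗[ℂ] (A ⊗[ℂ] C)) : G.braid (G.braidInv x) = x := by
  rw [← mixHead_comp, G.σ_comp, mixHead_id]

theorem braidInv_braid (x : A ⊗[ℂ] (A ⊗[ℂ] C)) : G.braidInv (G.braid x) = x := by
  rw [← mixHead_comp, G.comp_σ, mixHead_id]

theorem coassoc_apply (x : A ⊗[ℂ] C) :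
    G.comul (G.comul x) = G.comul.lTensor A (G.comul x) := by
  refine eq_of_forall_attach (f := G.comul ∘ₗ G.comul)
    (g := G.comul.lTensor A ∘ₗ G.comul) (fun c a => ?_) x
  simp only [LinearMap.comp_apply, splitHead_attach, splitHead_lTensor]
  rw [lTensor_square (splitHead_attach G.φ c)]
  exact congrArg _ (LinearMap.congr_fun G.coassoc a)

theorem counit_comul (x : A ⊗[ℂ] C) : G.counit (G.comul x) = x := by
  refine eq_of_forall_attach (f := G.counit ∘ₗ G.comul) (g := LinearMap.id) (fun c a => ?_) x
  simp only [LinearMap.comp_apply, splitHead_attach, evalHead_lTensor]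
  exact congrArg _ (LinearMap.congr_fun G.counit_left a)

theorem lTensor_counit_attach (c : C) (w : T2 A) :
    G.counit.lTensor A ((attach c).lTensor A w)
      = attach c (((TensorProduct.rid ℂ A).toLinearMap ∘ₗ G.ε.lTensor A) w) := by
  refine LinearMap.congr_fun (f := G.counit.lTensor A ∘ₗ (attach c).lTensor A)
    (g := attach c ∘ₗ (TensorProduct.rid ℂ A).toLinearMap ∘ₗ G.ε.lTensor A)
    (TensorProduct.ext' fun a b => ?_) w
  simp [evalHead, attach]

theorem lTensor_counit_comul (x : A ⊗[ℂ] C) : G.counit.lTensor A (G.comul x) = x := by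
  refine eq_of_forall_attach (f := G.counit.lTensor A ∘ₗ G.comul) (g := LinearMap.id)
    (fun c a => ?_) x
  simp only [LinearMap.comp_apply, splitHead_attach, lTensor_counit_attach]
  exact congrArg _ (LinearMap.congr_fun G.counit_right a)

theorem mulHead_antipode_comul (x : A ⊗[ℂ] C) :
    mulHead (G.antipode (G.comul x)) = 1 ⊗ₜ G.counit x := by
  refine eq_of_forall_attach (f := mulHead ∘ₗ G.antipode ∘ₗ G.comul)
    (g := TensorProduct.mk ℂ A C 1 ∘ₗ G.counit) (fun c a => ?_) x
  have h_antipode : mA (G.κ.rTensor A (G.φ a)) = G.ε a • (1 : A) :=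
    (LinearMap.congr_fun G.antipode_left a).trans (Algebra.algebraMap_eq_smul_one _)
  simp only [LinearMap.comp_apply, splitHead_attach, rTensor_lTensor_comm, mergeHead_attach,
    evalHead_attach, h_antipode]
  exact TensorProduct.smul_tmul _ _ _

theorem mulHead_lTensor_antipode_comul (x : A ⊗[ℂ] C) :
    mulHead (G.antipode.lTensor A (G.comul x)) = 1 ⊗ₜ G.counit x := by
  refine eq_of_forall_attach (f := mulHead ∘ₗ G.antipode.lTensor A ∘ₗ G.comul)
    (g := TensorProduct.mk ℂ A C 1 ∘ₗ G.counit) (fun c a => ?_) x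
  have h_antipode : mA (G.κ.lTensor A (G.φ a)) = G.ε a • (1 : A) :=
    (LinearMap.congr_fun G.antipode_right a).trans (Algebra.algebraMap_eq_smul_one _)
  simp only [LinearMap.comp_apply, splitHead_attach]
  rw [lTensor_square (rTensor_attach G.κ c), mergeHead_attach, h_antipode]
  exact TensorProduct.smul_tmul _ _ _

theorem comul_mulHead (x : A ⊗[ℂ] (A ⊗[ℂ] C)) :
    G.comul (mulHead x)
      = mulHead ((mulHead.lTensor A).lTensor A
          (G.braid.lTensor A (G.comul (G.comul.lTensor A x)))) := by
  refine eq_of_forall_lTensor_attach (f := G.comul ∘ₗ mulHead)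
    (g := mulHead ∘ₗ (mulHead.lTensor A).lTensor A ∘ₗ G.braid.lTensor A ∘ₗ G.comul ∘ₗ
      G.comul.lTensor A) (fun c w => ?_) x
  simp only [LinearMap.comp_apply, mergeHead_attach, splitHead_attach]
  rw [lTensor_square (splitHead_attach G.φ c), splitHead_lTensor,
    lTensor_square (mixHead_lTensor G.σ (attach c)),
    lTensor_square (lTensor_square (mergeHead_attach mA c)), mergeHead_lTensor]
  exact congrArg _ (LinearMap.congr_fun G.comul_mul w)

theorem mixed_coassoc_apply (x : A ⊗[ℂ] (A ⊗[ℂ] C)) :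
    G.braid (G.comul.lTensor A (G.braidInv (G.comul.lTensor A x)))
      = (G.braid.lTensor A).lTensor A
          (G.comul.lTensor A (G.braidInv.lTensor A (G.comul x))) := by
  refine eq_of_forall_lTensor_attach
    (f := G.braid ∘ₗ G.comul.lTensor A ∘ₗ G.braidInv ∘ₗ G.comul.lTensor A)
    (g := (G.braid.lTensor A).lTensor A ∘ₗ G.comul.lTensor A ∘ₗ G.braidInv.lTensor A ∘ₗ G.comul)
    (fun c w => ?_) x
  simp only [LinearMap.comp_apply]
  rw [lTensor_square (splitHead_attach G.φ c), mixHead_lTensor,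
    lTensor_square (splitHead_lTensor G.φ (attach c)), mixHead_lTensor, splitHead_lTensor,
    lTensor_square (mixHead_attach G.σ' c), lTensor_square (splitHead_lTensor G.φ (attach c)),
    lTensor_square (lTensor_square (mixHead_attach G.σ c))]
  exact congrArg _ (LinearMap.congr_fun G.mixed_coassoc w)

/-- The pairing `εm ⊗ id_C` of the two leading factors. -/
def counitMul : A ⊗[ℂ] (A ⊗[ℂ] C) →ₗ[ℂ] C := G.counit ∘ₗ mulHead

theorem counitMul_lTensor (g : C →ₗ[ℂ] D) (x : A ⊗[ℂ] (A ⊗[ℂ] C)) :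
    G.counitMul ((g.lTensor A).lTensor A x) = g (G.counitMul x) := by
  simp only [counitMul, LinearMap.comp_apply, mergeHead_lTensor, evalHead_lTensor]

theorem mulHead_antipode_mulHead_comul (x : A ⊗[ℂ] (A ⊗[ℂ] C)) :
    mulHead (G.antipode (mulHead.lTensor A (G.comul x))) = G.counit x := by
  rw [rTensor_lTensor_comm, ← mulHead_assoc, mulHead_antipode_comul, mulHead_one_tmul]

theorem mulHead_lTensor_antipode_mulHead_comul (x : A ⊗[ℂ] (A ⊗[ℂ] C)) :
    mulHead (G.antipode.lTensor A (mulHead (G.comul.lTensor A x))) = G.counit.lTensor A x := by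
  rw [← mergeHead_lTensor, mulHead_assoc, ← lTensor_comp_apply,
    lTensor_square (f' := TensorProduct.mk ℂ A C 1) (g' := G.counit)
      G.mulHead_lTensor_antipode_comul, mulHead_lTensor_mk_one]

-- The antipode makes the identity of `A` invertible for convolution.
theorem eq_counit_of_mulHead_lTensor_comul {f : A ⊗[ℂ] (A ⊗[ℂ] C) →ₗ[ℂ] A ⊗[ℂ] C}
    (hf : ∀ x, mulHead (f.lTensor A (G.comul x)) = mulHead x) (x : A ⊗[ℂ] (A ⊗[ℂ] C)) :
    f x = G.counit x := by
  have h_comp : (mulHead ∘ₗ f.lTensor A) ∘ₗ G.comul = mulHead := LinearMap.ext hf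
  calc f x
      = G.counit (f.lTensor A (G.comul x)) := by rw [evalHead_lTensor, counit_comul]
    _ = mulHead (G.antipode (mulHead.lTensor A (G.comul (f.lTensor A (G.comul x))))) :=
        (G.mulHead_antipode_mulHead_comul _).symm
    _ = mulHead (G.antipode (mulHead.lTensor A (G.comul x))) := by
        rw [splitHead_lTensor, coassoc_apply, ← lTensor_comp_apply, ← lTensor_comp_apply, h_comp]
    _ = G.counit x := G.mulHead_antipode_mulHead_comul x

theorem lTensor_counitMul_braid_comul (x : A ⊗[ℂ] (A ⊗[ℂ] C)) :
    G.counitMul.lTensor A (G.braid (G.comul.lTensor A x)) = G.counit x := by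
  refine G.eq_counit_of_mulHead_lTensor_comul
    (f := G.counitMul.lTensor A ∘ₗ G.braid ∘ₗ G.comul.lTensor A) (fun y => ?_) x
  have h_counit := G.lTensor_counit_comul (mulHead y)
  rw [comul_mulHead, ← mergeHead_lTensor, splitHead_lTensor] at h_counit
  simpa only [counitMul, lTensor_comp, LinearMap.comp_apply] using h_counit

theorem counitMul_braid_comul_lTensor (g : C →ₗ[ℂ] D) (x : A ⊗[ℂ] (A ⊗[ℂ] C)) :
    G.counitMul (G.braid.lTensor A (G.comul ((g.lTensor A).lTensor A x)))
      = g.lTensor A (G.counitMul (G.braid.lTensor A (G.comul x))) := by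
  rw [splitHead_lTensor, lTensor_square (mixHead_lTensor G.σ g), counitMul_lTensor]

theorem mulHead_counitMul_braid_comul (x : A ⊗[ℂ] (A ⊗[ℂ] C)) :
    mulHead (G.counitMul (G.braid.lTensor A (G.comul (G.comul.lTensor A x)))) = mulHead x := by
  rw [← counitMul_lTensor, counitMul, LinearMap.comp_apply, ← comul_mulHead, counit_comul]

theorem counitMul_braid_comul (x : A ⊗[ℂ] (A ⊗[ℂ] C)) :
    G.counitMul (G.braid.lTensor A (G.comul x)) = G.counit.lTensor A x := by
  set y := G.comul.lTensor A x with hy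
  calc G.counitMul (G.braid.lTensor A (G.comul x))
      = G.counit.lTensor A (G.counitMul (G.braid.lTensor A (G.comul y))) := by
        rw [← counitMul_braid_comul_lTensor, hy, lTensor_leftInverse G.lTensor_counit_comul]
    _ = mulHead (G.antipode.lTensor A (mulHead
          (G.counitMul (G.braid.lTensor A (G.comul (G.comul.lTensor A y)))))) := by
        rw [← mulHead_lTensor_antipode_mulHead_comul, ← counitMul_braid_comul_lTensor, hy,
          lTensor_square G.coassoc_apply]
    _ = G.counit.lTensor A x := by
        rw [mulHead_counitMul_braid_comul, hy, mulHead_lTensor_antipode_mulHead_comul]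

/-- The map `τ⁻¹σ = (id² ⊗ ε)(id ⊗ σ)(φ ⊗ id)`, tensored with `id_C`. -/
def tauInvBraid : A ⊗[ℂ] (A ⊗[ℂ] C) →ₗ[ℂ] A ⊗[ℂ] (A ⊗[ℂ] C) :=
  (G.counit.lTensor A).lTensor A ∘ₗ G.braid.lTensor A ∘ₗ G.comul

theorem braid_comul_braidInv (x : A ⊗[ℂ] (A ⊗[ℂ] C)) :
    G.braid (G.comul.lTensor A (G.braidInv x))
      = G.tauInvBraid.lTensor A (G.braidInv.lTensor A (G.comul x)) := by
  have h_mixed := congrArg (((G.counit.lTensor A).lTensor A).lTensor A) (G.mixed_coassoc_apply x)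
  rw [← mixHead_lTensor, ← lTensor_square (splitHead_lTensor G.φ G.counit), ← mixHead_lTensor,
    lTensor_leftInverse G.lTensor_counit_comul] at h_mixed
  simpa only [tauInvBraid, lTensor_comp_apply] using h_mixed

theorem tauInvBraid_eq (x : A ⊗[ℂ] (A ⊗[ℂ] C)) :
    G.tauInvBraid x = G.counit (G.braid (G.comul.lTensor A x)) := by
  have h_counit := congrArg G.counit (G.braid_comul_braidInv (G.braid x))
  rw [evalHead_lTensor, evalHead_lTensor, counit_comul, braidInv_braid] at h_counit
  exact h_counit.symm

theorem tauInvBraid_braidInv_comul (x : A ⊗[ℂ] (A ⊗[ℂ] C)) :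
    G.tauInvBraid (G.braidInv (G.comul.lTensor A x))
      = G.braid.lTensor A (G.comul (G.braidInv x)) := by
  rw [tauInvBraid_eq, mixed_coassoc_apply, evalHead_lTensor, evalHead_lTensor, evalHead_lTensor,
    counit_comul]

theorem comul_tauInvBraid (x : A ⊗[ℂ] (A ⊗[ℂ] C)) :
    G.comul (G.tauInvBraid x) = G.tauInvBraid.lTensor A (G.comul x) := by
  simp only [tauInvBraid, LinearMap.comp_apply, lTensor_comp_apply, splitHead_lTensor,
    coassoc_apply]

theorem lTensor_comul_tauInvBraid (x : A ⊗[ℂ] (A ⊗[ℂ] C)) :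
    G.comul.lTensor A (G.tauInvBraid x) = G.tauInvBraid (G.comul.lTensor A x) := by
  rw [tauInvBraid_eq, tauInvBraid_eq, ← evalHead_lTensor, ← mixHead_lTensor,
    ← lTensor_square G.coassoc_apply]

theorem counitMul_tauInvBraid (x : A ⊗[ℂ] (A ⊗[ℂ] C)) :
    G.counitMul (G.tauInvBraid x) = G.counit (G.counit.lTensor A x) := by
  rw [tauInvBraid, LinearMap.comp_apply, counitMul_lTensor, LinearMap.comp_apply,
    counitMul_braid_comul, evalHead_lTensor]

/-- The map `σ⁻¹τ`, defined by the formula `(id ⊗ εm ⊗ id)(φ ⊗ φ)` and tensored with `id_C`. -/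
def braidInvTau : A ⊗[ℂ] (A ⊗[ℂ] C) →ₗ[ℂ] A ⊗[ℂ] (A ⊗[ℂ] C) :=
  G.counitMul.lTensor A ∘ₗ G.comul ∘ₗ G.comul.lTensor A

theorem braidInvTau_lTensor (g : C →ₗ[ℂ] D) (x : A ⊗[ℂ] (A ⊗[ℂ] C)) :
    G.braidInvTau ((g.lTensor A).lTensor A x) = (g.lTensor A).lTensor A (G.braidInvTau x) := by
  simp only [braidInvTau, LinearMap.comp_apply]
  rw [lTensor_square (splitHead_lTensor G.φ g), splitHead_lTensor,
    lTensor_square (G.counitMul_lTensor (g.lTensor A))]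

theorem comul_braidInvTau (x : A ⊗[ℂ] (A ⊗[ℂ] C)) :
    G.comul (G.braidInvTau x) = G.braidInvTau.lTensor A (G.comul x) := by
  simp only [braidInvTau, lTensor_comp_apply, LinearMap.comp_apply]
  rw [splitHead_lTensor, coassoc_apply, splitHead_lTensor]

theorem lTensor_comul_braidInvTau (x : A ⊗[ℂ] (A ⊗[ℂ] C)) :
    G.comul.lTensor A (G.braidInvTau x) = G.braidInvTau (G.comul.lTensor A x) := by
  simp only [braidInvTau, LinearMap.comp_apply]
  rw [← lTensor_square (G.counitMul_lTensor G.comul), ← splitHead_lTensor,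
    ← lTensor_square G.coassoc_apply]

theorem counit_braidInvTau (x : A ⊗[ℂ] (A ⊗[ℂ] C)) :
    G.counit (G.braidInvTau x) = G.counitMul (G.comul.lTensor A x) := by
  rw [braidInvTau, LinearMap.comp_apply, evalHead_lTensor, LinearMap.comp_apply, counit_comul]

theorem lTensor_counit_braidInvTau (x : A ⊗[ℂ] (A ⊗[ℂ] C)) :
    G.counit.lTensor A (G.braidInvTau x) = G.counitMul.lTensor A (G.comul x) := by
  rw [braidInvTau, LinearMap.comp_apply, ← lTensor_square (G.counitMul_lTensor G.counit),
    LinearMap.comp_apply, ← splitHead_lTensor, lTensor_leftInverse G.lTensor_counit_comul]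

theorem braidInvTau_tauInvBraid (x : A ⊗[ℂ] (A ⊗[ℂ] C)) :
    G.braidInvTau (G.tauInvBraid x) = x := by
  rw [braidInvTau, LinearMap.comp_apply, LinearMap.comp_apply, lTensor_comul_tauInvBraid,
    comul_tauInvBraid, lTensor_square G.counitMul_tauInvBraid, ← splitHead_lTensor,
    lTensor_counit_comul, lTensor_leftInverse G.counit_comul]

theorem comul_braid (x : A ⊗[ℂ] (A ⊗[ℂ] C)) :
    G.comul (G.braid x)
      = G.braid.lTensor A (G.braidInvTau.lTensor A (G.braid (G.comul.lTensor A x))) := by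
  have h_braid := G.braid_comul_braidInv (G.braid x)
  rw [braidInv_braid] at h_braid
  rw [h_braid, lTensor_leftInverse G.braidInvTau_tauInvBraid, lTensor_leftInverse G.braid_braidInv]

theorem lTensor_comul_braid (x : A ⊗[ℂ] (A ⊗[ℂ] C)) :
    G.comul.lTensor A (G.braid x)
      = G.braid (G.braidInvTau (G.braid.lTensor A (G.comul x))) := by
  have h_braid := G.tauInvBraid_braidInv_comul (G.braid x)
  rw [braidInv_braid] at h_braid
  rw [← h_braid, braidInvTau_tauInvBraid, braid_braidInv]

/-- The map `τσ⁻¹ = (id² ⊗ ε)(id ⊗ σ⁻¹)(φ ⊗ id)`, tensored with `id_C`. -/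
def tauBraidInv : A ⊗[ℂ] (A ⊗[ℂ] C) →ₗ[ℂ] A ⊗[ℂ] (A ⊗[ℂ] C) :=
  (G.counit.lTensor A).lTensor A ∘ₗ G.braidInv.lTensor A ∘ₗ G.comul

theorem tauBraidInv_braid (x : A ⊗[ℂ] (A ⊗[ℂ] C)) :
    G.tauBraidInv (G.braid x) = G.braid (G.braidInvTau x) := by
  have h_counitMul : G.counitMul.lTensor A ∘ₗ G.braid ∘ₗ G.comul.lTensor A
      = (G.counit : A ⊗[ℂ] (A ⊗[ℂ] C) →ₗ[ℂ] A ⊗[ℂ] C) :=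
    LinearMap.ext G.lTensor_counitMul_braid_comul
  calc G.tauBraidInv (G.braid x)
      = (G.counitMul.lTensor A).lTensor A (G.comul.lTensor A (G.braid (G.comul.lTensor A x))) := by
        rw [tauBraidInv, LinearMap.comp_apply, LinearMap.comp_apply, comul_braid,
          lTensor_leftInverse G.braidInv_braid, lTensor_square G.lTensor_counit_braidInvTau]
    _ = G.braid (G.braidInvTau ((G.counitMul.lTensor A).lTensor A
          (G.braid.lTensor A ((G.comul.lTensor A).lTensor A (G.comul x))))) := by
        rw [lTensor_comul_braid, ← mixHead_lTensor, ← braidInvTau_lTensor, splitHead_lTensor]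
    _ = G.braid (G.braidInvTau x) := by
        rw [← lTensor_comp_apply, ← lTensor_comp_apply, LinearMap.comp_assoc, h_counitMul,
          lTensor_counit_comul]

theorem counit_braidInv_comul_braid (x : A ⊗[ℂ] (A ⊗[ℂ] C)) :
    G.counit (G.braidInv (G.comul.lTensor A (G.braid x))) = G.braid (G.braidInvTau x) := by
  have h_comul (y : A ⊗[ℂ] (A ⊗[ℂ] C)) : G.comul (G.braid y)
      = (G.braid ∘ₗ G.braidInvTau).lTensor A ((G.braid ∘ₗ G.comul.lTensor A) y) := by
    rw [comul_braid, lTensor_comp_apply, LinearMap.comp_apply]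
  calc G.counit (G.braidInv (G.comul.lTensor A (G.braid x)))
      = G.counitMul (G.comul.lTensor A (G.braid.lTensor A (G.comul x))) := by
        rw [lTensor_comul_braid, braidInv_braid, counit_braidInvTau]
    _ = G.braid (G.braidInvTau
          (G.counitMul (G.braid.lTensor A (G.comul (G.comul.lTensor A x))))) := by
        rw [lTensor_square h_comul, counitMul_lTensor, lTensor_comp_apply,
          ← splitHead_lTensor, LinearMap.comp_apply]
    _ = G.braid (G.braidInvTau x) := by
        rw [counitMul_braid_comul, lTensor_leftInverse G.counit_comul]

theorem tauBraidInv_eq (x : A ⊗[ℂ] (A ⊗[ℂ] C)) :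
    G.tauBraidInv x = G.counit (G.braidInv (G.comul.lTensor A x)) := by
  rw [← G.braid_braidInv x, tauBraidInv_braid, counit_braidInv_comul_braid]

theorem comul_tauBraidInv (x : A ⊗[ℂ] (A ⊗[ℂ] C)) :
    G.comul (G.tauBraidInv x) = G.tauBraidInv.lTensor A (G.comul x) := by
  simp only [tauBraidInv, LinearMap.comp_apply, lTensor_comp_apply, splitHead_lTensor,
    coassoc_apply]

theorem lTensor_comul_tauBraidInv (x : A ⊗[ℂ] (A ⊗[ℂ] C)) :
    G.comul.lTensor A (G.tauBraidInv x) = G.tauBraidInv (G.comul.lTensor A x) := by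
  rw [tauBraidInv_eq, tauBraidInv_eq, ← evalHead_lTensor, ← mixHead_lTensor,
    lTensor_square G.coassoc_apply]

theorem mixHead_tau (x : A ⊗[ℂ] (A ⊗[ℂ] C)) : mixHead G.τ x = G.tauBraidInv (G.braid x) := by
  refine eq_of_forall_lTensor_attach (g := G.tauBraidInv ∘ₗ G.braid) (fun c w => ?_) x
  rw [mixHead_attach, LinearMap.comp_apply, mixHead_attach, tauBraidInv, LinearMap.comp_apply,
    LinearMap.comp_apply, splitHead_lTensor, lTensor_square (mixHead_attach G.σ' c),
    lTensor_square (G.lTensor_counit_attach c)]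
  rfl

theorem mixHead_tau_comp_braidInv :
    mixHead (G.τ ∘ₗ G.σ') = (G.tauBraidInv : A ⊗[ℂ] (A ⊗[ℂ] C) →ₗ[ℂ] A ⊗[ℂ] (A ⊗[ℂ] C)) :=
  LinearMap.ext fun x => by rw [mixHead_comp, mixHead_tau, braid_braidInv]

theorem mixHead_braidInv_comp_tau :
    mixHead (G.σ' ∘ₗ G.τ) = (G.braidInvTau : A ⊗[ℂ] (A ⊗[ℂ] C) →ₗ[ℂ] A ⊗[ℂ] (A ⊗[ℂ] C)) :=
  LinearMap.ext fun x => by rw [mixHead_comp, mixHead_tau, tauBraidInv_braid, braidInv_braid]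

/-- Left comodule maps `f : A ⊗ A → A ⊗ A`: the identity `(φ ⊗ id) f = (id ⊗ f)(φ ⊗ id)`,
tensored with `id_C`. -/
def IsLeftColinear (f : T2 A →ₗ[ℂ] T2 A) (C : Type*) [AddCommMonoid C] [Module ℂ C] : Prop :=
  ∀ x : A ⊗[ℂ] (A ⊗[ℂ] C), G.comul (mixHead f x) = (mixHead f).lTensor A (G.comul x)

/-- Right comodule maps `f : A ⊗ A → A ⊗ A`: the identity `(id ⊗ φ) f = (f ⊗ id)(id ⊗ φ)`,
tensored with `id_C`. -/
def IsRightColinear (f : T2 A →ₗ[ℂ] T2 A) (C : Type*) [AddCommMonoid C] [Module ℂ C] : Prop :=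
  ∀ x : A ⊗[ℂ] (A ⊗[ℂ] C), G.comul.lTensor A (mixHead f x) = mixHead f (G.comul.lTensor A x)

section Colinear

variable {G} {f g : T2 A →ₗ[ℂ] T2 A}

theorem IsLeftColinear.of_inverse (hf : G.IsLeftColinear f C) (hfg : f ∘ₗ g = LinearMap.id)
    (hgf : g ∘ₗ f = LinearMap.id) : G.IsLeftColinear g C := fun x => by
  have h_left (y : A ⊗[ℂ] (A ⊗[ℂ] C)) : mixHead g (mixHead f y) = y := by
    rw [← mixHead_comp, hgf, mixHead_id]
  have h_right : mixHead f (mixHead g x) = x := by rw [← mixHead_comp, hfg, mixHead_id]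
  rw [← lTensor_leftInverse h_left (G.comul (mixHead g x)), ← hf, h_right]

theorem IsRightColinear.of_inverse (hf : G.IsRightColinear f C) (hfg : f ∘ₗ g = LinearMap.id)
    (hgf : g ∘ₗ f = LinearMap.id) : G.IsRightColinear g C := fun x => by
  have h_right : mixHead f (mixHead g x) = x := by rw [← mixHead_comp, hfg, mixHead_id]
  rw [← mixHead_id (G.comul.lTensor A (mixHead g x)), ← hgf, mixHead_comp, ← hf, h_right]

theorem IsRightColinear.mixHead_comm (hf : G.IsRightColinear f (A ⊗[ℂ] C))
    (hg : G.IsLeftColinear g C) (x : A ⊗[ℂ] (A ⊗[ℂ] (A ⊗[ℂ] C))) :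
    mixHead f ((mixHead g).lTensor A x) = (mixHead g).lTensor A (mixHead f x) := by
  refine Function.LeftInverse.injective (lTensor_leftInverse G.counit_comul) ?_
  rw [hf, lTensor_square hg, mixHead_lTensor, ← hf, lTensor_square hg]

theorem IsRightColinear.op12_comp_op23 (hf : G.IsRightColinear f (A ⊗[ℂ] ℂ))
    (hg : G.IsLeftColinear g ℂ) : op12 f ∘ₗ op23 g = op23 g ∘ₗ op12 f := by
  have h_inj : Function.Injective (((attach (M := A) (1 : ℂ)).lTensor A).lTensor A) :=
    Function.LeftInverse.injective (lTensor_leftInverse (lTensor_leftInverse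
      (f := (TensorProduct.rid ℂ A).toLinearMap) (TensorProduct.rid ℂ A).apply_symm_apply))
  have h_op12 (y : T3 A) : ((attach (1 : ℂ)).lTensor A).lTensor A (op12 f y)
      = mixHead f (((attach (1 : ℂ)).lTensor A).lTensor A y) := (mixHead_lTensor f _ y).symm
  have h_op23 (y : T3 A) : ((attach (1 : ℂ)).lTensor A).lTensor A (op23 g y)
      = (mixHead g).lTensor A (((attach (1 : ℂ)).lTensor A).lTensor A y) :=
    lTensor_square (fun w => (mixHead_attach g 1 w).symm) y
  refine LinearMap.ext fun x => h_inj ?_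
  simp only [LinearMap.comp_apply, h_op12, h_op23, hf.mixHead_comm hg]

end Colinear

theorem isLeftColinear_braidInv_comp_tau : G.IsLeftColinear (G.σ' ∘ₗ G.τ) C := fun x => by
  simpa only [mixHead_braidInv_comp_tau] using G.comul_braidInvTau x

theorem isRightColinear_braidInv_comp_tau : G.IsRightColinear (G.σ' ∘ₗ G.τ) C := fun x => by
  simpa only [mixHead_braidInv_comp_tau] using G.lTensor_comul_braidInvTau x

theorem isLeftColinear_tau_comp_braidInv : G.IsLeftColinear (G.τ ∘ₗ G.σ') C := fun x => by
  simpa only [mixHead_tau_comp_braidInv] using G.comul_tauBraidInv x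

theorem isRightColinear_tau_comp_braidInv : G.IsRightColinear (G.τ ∘ₗ G.σ') C := fun x => by
  simpa only [mixHead_tau_comp_braidInv] using G.lTensor_comul_tauBraidInv x

section Inverse

variable {τ' : T2 A →ₗ[ℂ] T2 A}

theorem tau_comp_braidInv_comp_braid_comp (hττ' : G.τ ∘ₗ τ' = LinearMap.id) :
    (G.τ ∘ₗ G.σ') ∘ₗ (G.σ ∘ₗ τ') = LinearMap.id := by
  rw [LinearMap.comp_assoc, ← LinearMap.comp_assoc τ', G.comp_σ, LinearMap.id_comp, hττ']

theorem braid_comp_comp_tau_comp_braidInv (hτ'τ : τ' ∘ₗ G.τ = LinearMap.id) :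
    (G.σ ∘ₗ τ') ∘ₗ (G.τ ∘ₗ G.σ') = LinearMap.id := by
  rw [LinearMap.comp_assoc, ← LinearMap.comp_assoc G.σ', hτ'τ, LinearMap.id_comp, G.σ_comp]

theorem isLeftColinear_braid_comp (hττ' : G.τ ∘ₗ τ' = LinearMap.id)
    (hτ'τ : τ' ∘ₗ G.τ = LinearMap.id) : G.IsLeftColinear (G.σ ∘ₗ τ') C :=
  G.isLeftColinear_tau_comp_braidInv.of_inverse (G.tau_comp_braidInv_comp_braid_comp hττ')
    (G.braid_comp_comp_tau_comp_braidInv hτ'τ)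

theorem isRightColinear_braid_comp (hττ' : G.τ ∘ₗ τ' = LinearMap.id)
    (hτ'τ : τ' ∘ₗ G.τ = LinearMap.id) : G.IsRightColinear (G.σ ∘ₗ τ') C :=
  G.isRightColinear_tau_comp_braidInv.of_inverse (G.tau_comp_braidInv_comp_braid_comp hττ')
    (G.braid_comp_comp_tau_comp_braidInv hτ'τ)

end Inverse

end BQG

/-- Commutation relations among `στ⁻¹` and `σ⁻¹τ` (for any inverse `τ'` of `τ`). -/
theorem bqg_sigma_tau_commutation {A : Type*} [Ring A] [Algebra ℂ A] (G : BQG A)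
    (τ' : T2 A →ₗ[ℂ] T2 A) (hττ' : G.τ ∘ₗ τ' = LinearMap.id)
    (hτ'τ : τ' ∘ₗ G.τ = LinearMap.id) :
    op12 (G.σ ∘ₗ τ') ∘ₗ op23 (G.σ ∘ₗ τ') = op23 (G.σ ∘ₗ τ') ∘ₗ op12 (G.σ ∘ₗ τ') ∧
    op12 (G.σ ∘ₗ τ') ∘ₗ op23 (G.σ' ∘ₗ G.τ) = op23 (G.σ' ∘ₗ G.τ) ∘ₗ op12 (G.σ ∘ₗ τ') ∧
    op12 (G.σ' ∘ₗ G.τ) ∘ₗ op23 (G.σ' ∘ₗ G.τ)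
      = op23 (G.σ' ∘ₗ G.τ) ∘ₗ op12 (G.σ' ∘ₗ G.τ) := by
  have hl : G.IsLeftColinear (G.σ ∘ₗ τ') ℂ :=
    G.isLeftColinear_braid_comp hττ' hτ'τ
  have hr : G.IsRightColinear (G.σ ∘ₗ τ') (A ⊗[ℂ] ℂ) :=
    G.isRightColinear_braid_comp hττ' hτ'τ
  exact ⟨hr.op12_comp_op23 hl,
    hr.op12_comp_op23 G.isLeftColinear_braidInv_comp_tau,
    G.isRightColinear_braidInv_comp_tau.op12_comp_op23 G.isLeftColinear_braidInv_comp_tau⟩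
end
end
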